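/- Every CO-charming space whose diagonal {(x,x) : x ∈ X} is a Gδ-subset of X × X has a countable network. -/

import Mathlib

open Set Function TopologicalSpace

universe u

/-- A map between topological spaces is *perfect* if it is continuous, closed, and
every fiber is compact. -/
def PerfectMap {Y : Type*} {Z : Type*} [TopologicalSpace Y] [TopologicalSpace Z]
    (f : Y → Z) : Prop :=
  Continuous f ∧ IsClosedMap f ∧ ∀ z : Z, IsCompact (f ⁻¹' {z})

/-- A topological space `X` is a *Lindelöf Σ-space* if there exist a topological space `Y`,
a continuous surjection from `Y` onto `X`, and a perfect surjection from `Y` onto some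
second-countable space. -/
def IsLindelofSigma (X : Type u) [TopologicalSpace X] : Prop :=
  ∃ (Y : Type u) (tY : TopologicalSpace Y) (Z : Type u) (tZ : TopologicalSpace Z),
    @SecondCountableTopology Z tZ ∧
    (∃ f : Y → X, @Continuous Y X tY _ f ∧ Surjective f) ∧
    (∃ g : Y → Z, @PerfectMap Y Z tY tZ g ∧ Surjective g)

/-- A topological space `X` is a *charming space* if there is a subset `Y` of `X` that is a
Lindelöf Σ-space in the subspace topology and such that for every open `U ⊇ Y`,
the set `X \ U` is a Lindelöf Σ-space in the subspace topology. -/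
def IsCharming (X : Type u) [TopologicalSpace X] : Prop :=
  ∃ Y : Set X, IsLindelofSigma Y ∧
    ∀ U : Set X, IsOpen U → Y ⊆ U → IsLindelofSigma ↥(Uᶜ)

/-- A *CL-charming* space: the shell `Y` can be chosen closed. -/
def IsCLCharming (X : Type u) [TopologicalSpace X] : Prop :=
  ∃ Y : Set X, IsClosed Y ∧ IsLindelofSigma Y ∧
    ∀ U : Set X, IsOpen U → Y ⊆ U → IsLindelofSigma ↥(Uᶜ)

/-- A *CO-charming* space: the shell `Y` can be chosen compact. -/
def IsCOCharming (X : Type u) [TopologicalSpace X] : Prop :=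
  ∃ Y : Set X, IsCompact Y ∧ IsLindelofSigma Y ∧
    ∀ U : Set X, IsOpen U → Y ⊆ U → IsLindelofSigma ↥(Uᶜ)

/-- A space has a *countable network* if there is a countable family `N` of subsets such that
every point in every open set `V` is contained in a member of `N` contained in `V`. -/
def HasCountableNetwork (X : Type u) [TopologicalSpace X] : Prop :=
  ∃ N : Set (Set X), N.Countable ∧
    ∀ x : X, ∀ V : Set X, IsOpen V → x ∈ V → ∃ n ∈ N, x ∈ n ∧ n ⊆ V

/-- A topological space `X` is *weak (4,4)-structured* if there exist a topological space `Y`,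
a continuous surjection from `Y` onto `X`, and a perfect surjection from `Y` onto some
charming space. -/
def IsWeak44Structured (X : Type u) [TopologicalSpace X] : Prop :=
  ∃ (Y : Type u) (tY : TopologicalSpace Y) (M : Type u) (tM : TopologicalSpace M),
    @IsCharming M tM ∧
    (∃ f : Y → X, @Continuous Y X tY _ f ∧ Surjective f) ∧
    (∃ g : Y → M, @PerfectMap Y M tY tM g ∧ Surjective g)

/-!
Since `X` is Hausdorff, a Lindelöf subset of `X × X` that misses the diagonal is covered by
countably many boxes `U × V` with `U`, `V` open and disjoint.

If `X` is a Lindelöf Σ-space, then so is `X × X`, and the complement of a `Gδ`-diagonal is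
Lindelöf. The sides of the boxes covering it generate a coarser second-countable Hausdorff topology,
and pairing it with the perfect map `Y → Z` of the Σ-structure gives a closed map from `Y` to a
second-countable space whose fibers are collapsed by `Y → X`. Preimages of basic open sets therefore
map onto a network of `X`.

If `X` is CO-charming with compact shell `K`, then `X` is Lindelöf, hence so is `K × X` minus the
diagonal, and the boxes covering it show that `K` is a `Gδ`-set. Thus `X` is the union of `K` and
countably many complements of open neighborhoods of `K`, all of which are Lindelöf Σ-spaces.
-/

open Filter Topology

section Lindelof

variable {X Y : Type*} [TopologicalSpace X] [TopologicalSpace Y]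

lemma isLindelof_preimage_of_isClosedMap {f : X → Y} (hf : IsClosedMap f)
    (hfib : ∀ y, IsLindelof (f ⁻¹' {y})) {s : Set Y} (hs : IsLindelof s) :
    IsLindelof (f ⁻¹' s) := by
  intro l _ _ hl
  obtain ⟨y, hys, hy⟩ := hs (f := map f l) (map_le_iff_le_comap.2 (by rwa [comap_principal]))
  by_contra! h
  have hdisj : Disjoint (𝓝ˢ (f ⁻¹' {y})) l :=
    (hfib y).disjoint_nhdsSet_left.2 fun x hx ↦
      disjoint_iff.2 (not_neBot.1 (h x (by rwa [mem_preimage, show f x = y from hx])))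
  have hdisj' : Disjoint (𝓝 y) (map f l) :=
    disjoint_comap_iff_map'.1 (hdisj.mono_left (isClosedMap_iff_comap_nhds_le.1 hf))
  exact hy.neBot.ne hdisj'.eq_bot

lemma isLindelof_diff_of_isGδ {s t : Set X} (hs : IsLindelof s) (ht : IsGδ t) :
    IsLindelof (s \ t) := by
  obtain ⟨T, hT, hTc, rfl⟩ := ht
  rw [sInter_eq_iInter, sdiff_iInter]
  have := hTc.to_subtype
  exact isLindelof_iUnion fun U ↦ hs.diff (hT U U.2)

lemma isLindelof_prod_univ_of_isCompact [LindelofSpace Y] {K : Set X} (hK : IsCompact K) :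
    IsLindelof (K ×ˢ (univ : Set Y)) := by
  have := isCompact_iff_compactSpace.1 hK
  have hproper : IsProperMap (Prod.snd : K × Y → Y) := isProperMap_snd_of_compactSpace
  have huniv : IsLindelof (univ : Set (K × Y)) :=
    isLindelof_preimage_of_isClosedMap hproper.isClosedMap
      (fun y ↦ (hproper.isCompact_preimage isCompact_singleton).isLindelof) isLindelof_univ
  convert huniv.image (continuous_subtype_val.prodMap continuous_id) using 1
  ext ⟨x, y⟩
  simp

end Lindelof

section Separation

variable {X : Type u} {Y : Type*} [TopologicalSpace X] [TopologicalSpace Y]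

lemma isClosedEmbedding_graph [T2Space Y] {f : X → Y} (hf : Continuous f) :
    IsClosedEmbedding fun x ↦ (x, f x) := by
  refine ⟨isEmbedding_graph hf, ?_⟩
  convert isClosed_eq (hf.comp continuous_fst) continuous_snd
  ext ⟨x, y⟩
  simp

lemma isGδ_diagonal_of_injective {f : X → Y} (hf : Continuous f) (hinj : Injective f)
    (h : IsGδ (diagonal Y)) : IsGδ (diagonal X) := by
  convert h.preimage (hf.prodMap hf)
  ext ⟨x, y⟩
  simp [hinj.eq_iff]

lemma exists_countable_disjoint_open_boxes [T2Space X] {s : Set (X × X)} (hs : IsLindelof s)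
    (hdiag : Disjoint s (diagonal X)) :
    ∃ P : Set (Set X × Set X), P.Countable ∧
      (∀ p ∈ P, IsOpen p.1 ∧ IsOpen p.2 ∧ Disjoint p.1 p.2) ∧ s ⊆ ⋃ p ∈ P, p.1 ×ˢ p.2 := by
  obtain ⟨P, hPsub, hPc, hcov⟩ := hs.elim_countable_subcover_image
    (b := {p : Set X × Set X | IsOpen p.1 ∧ IsOpen p.2 ∧ Disjoint p.1 p.2})
    (c := fun p ↦ p.1 ×ˢ p.2) (fun p hp ↦ hp.1.prod hp.2.1) fun ⟨x, y⟩ hxy ↦ by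
      obtain ⟨U, V, hU, hV, hxU, hyV, hUV⟩ := t2_separation (disjoint_left.1 hdiag hxy)
      exact mem_biUnion (x := (U, V)) ⟨hU, hV, hUV⟩ ⟨hxU, hyV⟩
  exact ⟨P, hPc, hPsub, hcov⟩

lemma exists_continuous_injective_secondCountable_t2 [T2Space X]
    (h : IsLindelof (diagonal X)ᶜ) :
    ∃ (Z : Type u) (_ : TopologicalSpace Z) (c : X → Z),
      SecondCountableTopology Z ∧ T2Space Z ∧ Continuous c ∧ Injective c := by
  obtain ⟨P, hPc, hP, hcov⟩ := exists_countable_disjoint_open_boxes h disjoint_compl_left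
  let B : Set (Set X) := Prod.fst '' P ∪ Prod.snd '' P
  have hle : ‹TopologicalSpace X› ≤ generateFrom B := by
    apply le_generateFrom
    rintro _ (⟨p, hp, rfl⟩ | ⟨p, hp, rfl⟩)
    exacts [(hP p hp).1, (hP p hp).2.1]
  refine ⟨X, generateFrom B, id,
    @SecondCountableTopology.mk X (generateFrom B) ⟨B, (hPc.image _).union (hPc.image _), rfl⟩,
    @T2Space.mk X (generateFrom B) ?_, continuous_id_of_le hle, injective_id⟩
  intro x y hxy
  obtain ⟨p, hp, hxp, hyp⟩ := mem_iUnion₂.1 (hcov (show (x, y) ∈ (diagonal X)ᶜ from hxy))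
  exact ⟨p.1, p.2, isOpen_generateFrom_of_mem (.inl (mem_image_of_mem _ hp)),
    isOpen_generateFrom_of_mem (.inr (mem_image_of_mem _ hp)), hxp, hyp, (hP p hp).2.2⟩

lemma isGδ_of_isCompact_of_isGδ_diagonal [T2Space X] [LindelofSpace X]
    (hdiag : IsGδ (diagonal X)) {K : Set X} (hK : IsCompact K) : IsGδ K := by
  obtain ⟨P, hPc, hP, hcov⟩ := exists_countable_disjoint_open_boxes
    (isLindelof_diff_of_isGδ (isLindelof_prod_univ_of_isCompact hK) hdiag) disjoint_sdiff_left
  let W (F : Set (Set X × Set X)) : Set X := ⋃ p ∈ F, p.1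
  refine ⟨W '' {F | (F.Finite ∧ F ⊆ P) ∧ K ⊆ W F}, ?_, ?_, ?_⟩
  · rintro _ ⟨F, ⟨⟨-, hFP⟩, -⟩, rfl⟩
    exact isOpen_biUnion fun p hp ↦ (hP p (hFP hp)).1
  · exact ((countable_ofPred_finite_subset hPc).mono fun _ hF ↦ hF.1).image _
  · refine subset_antisymm (subset_sInter ?_) fun x hx ↦ ?_
    · rintro _ ⟨F, hF, rfl⟩
      exact hF.2
    by_contra hxK
    have hKcov : K ⊆ ⋃ p ∈ {p ∈ P | x ∈ p.2}, p.1 := fun k hk ↦ by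
      have hkx : (k, x) ∈ K ×ˢ univ \ diagonal X :=
        ⟨⟨hk, mem_univ x⟩, fun heq : k = x ↦ hxK (heq ▸ hk)⟩
      obtain ⟨p, hp, hkp, hxp⟩ := mem_iUnion₂.1 (hcov hkx)
      exact mem_iUnion₂.2 ⟨p, ⟨hp, hxp⟩, hkp⟩
    obtain ⟨F, hFsub, hFfin, hKF⟩ :=
      hK.elim_finite_subcover_image (fun p hp ↦ (hP p hp.1).1) hKcov
    obtain ⟨p, hp, hxp⟩ := mem_iUnion₂.1
      (hx (W F) (mem_image_of_mem W ⟨⟨hFfin, fun p hp ↦ (hFsub hp).1⟩, hKF⟩))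
    exact disjoint_left.1 (hP p (hFsub hp).1).2.2 hxp (hFsub hp).2

end Separation

section CountableNetwork

variable {X : Type u} [TopologicalSpace X]

lemma hasCountableNetwork_of_sUnion_eq_univ {𝒜 : Set (Set X)} (hc : 𝒜.Countable)
    (hcov : ⋃₀ 𝒜 = univ) (h : ∀ A ∈ 𝒜, HasCountableNetwork A) : HasCountableNetwork X := by
  choose N hNc hN using h
  refine ⟨⋃ A, ⋃ hA : A ∈ 𝒜, image Subtype.val '' N A hA,
    hc.biUnion fun A hA ↦ (hNc A hA).image _, fun x V hV hxV ↦ ?_⟩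
  obtain ⟨A, hA, hxA⟩ := eq_univ_iff_forall.1 hcov x
  obtain ⟨n, hn, hxn, hnV⟩ := hN A hA ⟨x, hxA⟩ _ (hV.preimage continuous_subtype_val) hxV
  exact ⟨_, mem_iUnion₂.2 ⟨A, hA, mem_image_of_mem _ hn⟩, ⟨_, hxn, rfl⟩, image_subset_iff.2 hnV⟩

lemma hasCountableNetwork_of_isClosedMap_of_factorsThrough {Y W : Type*} [TopologicalSpace Y]
    [TopologicalSpace W] [SecondCountableTopology W] {f : Y → X} (hf : Continuous f)
    (hsurj : Surjective f) {h : Y → W} (hh : IsClosedMap h) (hfh : f.FactorsThrough h) :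
    HasCountableNetwork X := by
  refine ⟨(fun B ↦ f '' (h ⁻¹' B)) '' countableBasis W, (countable_countableBasis W).image _,
    fun x V hV hxV ↦ ?_⟩
  obtain ⟨y, rfl⟩ := hsurj x
  have hopen : IsOpen (kernImage h (f ⁻¹' V)) := isClosedMap_iff_kernImage.1 hh (hV.preimage hf)
  have hmem : h y ∈ kernImage h (f ⁻¹' V) := fun w hw ↦ by rwa [mem_preimage, hfh hw]
  obtain ⟨B, hB, hyB, hBV⟩ := (isBasis_countableBasis W).exists_subset_of_mem_open hmem hopen
  exact ⟨_, mem_image_of_mem _ hB, mem_image_of_mem f hyB,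
    image_subset_iff.2 (subset_kernImage_iff.1 hBV)⟩

end CountableNetwork

section LindelofSigma

lemma perfectMap_iff_isProperMap {Y Z : Type*} [TopologicalSpace Y] [TopologicalSpace Z]
    {f : Y → Z} : PerfectMap f ↔ IsProperMap f :=
  isProperMap_iff_isClosedMap_and_compact_fibers.symm

variable {X : Type u} [TopologicalSpace X]

lemma IsLindelofSigma.lindelofSpace (h : IsLindelofSigma X) : LindelofSpace X := by
  obtain ⟨Y, _, Z, _, _, ⟨f, hf, hfsurj⟩, g, ⟨-, hgclosed, hgfib⟩, -⟩ := h
  have : LindelofSpace Y := isLindelof_univ_iff.1 <|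
    isLindelof_preimage_of_isClosedMap hgclosed (fun z ↦ (hgfib z).isLindelof) isLindelof_univ
  exact .of_continuous_surjective hf hfsurj

lemma IsLindelofSigma.prod {X' : Type u} [TopologicalSpace X'] (h : IsLindelofSigma X)
    (h' : IsLindelofSigma X') : IsLindelofSigma (X × X') := by
  obtain ⟨Y, _, Z, _, _, ⟨f, hf, hfsurj⟩, g, hg, hgsurj⟩ := h
  obtain ⟨Y', _, Z', _, _, ⟨f', hf', hfsurj'⟩, g', hg', hgsurj'⟩ := h'
  rw [perfectMap_iff_isProperMap] at hg hg'
  exact ⟨Y × Y', inferInstance, Z × Z', inferInstance, inferInstance,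
    ⟨Prod.map f f', hf.prodMap hf', hfsurj.prodMap hfsurj'⟩,
    Prod.map g g', perfectMap_iff_isProperMap.2 (hg.prodMap hg'), hgsurj.prodMap hgsurj'⟩

lemma IsLindelofSigma.hasCountableNetwork_of_continuous_injective {Z : Type*} [TopologicalSpace Z]
    [SecondCountableTopology Z] [T2Space Z] (h : IsLindelofSigma X) {c : X → Z}
    (hc : Continuous c) (hinj : Injective c) : HasCountableNetwork X := by
  obtain ⟨Y, _, M, _, _, ⟨f, hf, hfsurj⟩, g, hg, -⟩ := h
  have hgraph : IsProperMap fun y ↦ (y, c (f y)) :=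
    (isClosedEmbedding_graph (hc.comp hf)).isProperMap
  have hproper : IsProperMap fun y ↦ (g y, c (f y)) :=
    ((perfectMap_iff_isProperMap.1 hg).prodMap isProperMap_id).comp hgraph
  exact hasCountableNetwork_of_isClosedMap_of_factorsThrough hf hfsurj hproper.isClosedMap
    fun y y' hyy' ↦ hinj (congrArg Prod.snd hyy')

lemma IsLindelofSigma.hasCountableNetwork_of_isGδ_diagonal [T2Space X] (h : IsLindelofSigma X)
    (hdiag : IsGδ (diagonal X)) : HasCountableNetwork X := by
  have := (h.prod h).lindelofSpace
  have hcompl : IsLindelof (diagonal X)ᶜ := by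
    simpa only [compl_eq_univ_sdiff] using isLindelof_diff_of_isGδ isLindelof_univ hdiag
  obtain ⟨Z, _, c, _, _, hc, hinj⟩ := exists_continuous_injective_secondCountable_t2 hcompl
  exact h.hasCountableNetwork_of_continuous_injective hc hinj

end LindelofSigma

section Charming

variable {X : Type u} [TopologicalSpace X]

lemma IsCOCharming.isCharming (h : IsCOCharming X) : IsCharming X :=
  let ⟨K, _, hK, hcompl⟩ := h
  ⟨K, hK, hcompl⟩

lemma IsCharming.lindelofSpace (h : IsCharming X) : LindelofSpace X := by
  obtain ⟨S, hS, hcompl⟩ := h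
  have hSL : IsLindelof S := isLindelof_iff_lindelofSpace.2 hS.lindelofSpace
  refine isLindelof_univ_iff.1 (isLindelof_of_countable_subcover fun U hU hcov ↦ ?_)
  obtain ⟨s, hs, hSs⟩ := hSL.elim_countable_subcover U hU ((subset_univ S).trans hcov)
  have hrest : IsLindelof (⋃ i ∈ s, U i)ᶜ := isLindelof_iff_lindelofSpace.2
    (hcompl _ (isOpen_biUnion fun i _ ↦ hU i) hSs).lindelofSpace
  obtain ⟨t, ht, hrest_t⟩ := hrest.elim_countable_subcover U hU ((subset_univ _).trans hcov)
  refine ⟨s ∪ t, hs.union ht, ?_⟩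
  rw [biUnion_union, univ_subset_iff]
  exact compl_subset_iff_union.1 hrest_t

theorem COCharming_gdelta_diagonal_countable_network_general [T2Space X] (hX : IsCOCharming X)
    (hdiag : IsGδ (diagonal X)) : HasCountableNetwork X := by
  have := hX.isCharming.lindelofSpace
  obtain ⟨K, hK, hKσ, hcompl⟩ := hX
  obtain ⟨T, hTo, hTc, hKT⟩ := isGδ_of_isCompact_of_isGδ_diagonal hdiag hK
  have hcov : ⋃₀ insert K (compl '' T) = univ := by
    rw [sUnion_insert, ← compl_sInter, ← hKT, union_compl_self]
  refine hasCountableNetwork_of_sUnion_eq_univ ((hTc.image _).insert K) hcov fun A hA ↦ ?_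
  have hA : IsLindelofSigma A := by
    obtain rfl | ⟨U, hU, rfl⟩ := hA
    · exact hKσ
    · exact hcompl U (hTo U hU) (hKT ▸ sInter_subset_of_mem hU)
  exact hA.hasCountableNetwork_of_isGδ_diagonal
    (isGδ_diagonal_of_injective continuous_subtype_val Subtype.val_injective hdiag)

end Charming

/-- A CO-charming space with a `Gδ`-diagonal has a countable network. -/
theorem COCharming_gdelta_diagonal_countable_network {X : Type u} [TopologicalSpace X]
    [T35Space X] (hX : IsCOCharming X) (hdiag : IsGδ (Set.diagonal X)) :
    HasCountableNetwork X :=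
  COCharming_gdelta_diagonal_countable_network_general hX hdiag
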